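/- Suppose (u,θ) is a smooth steady state of the 2D semi-dissipative Boussinesq system lying on the parabola ‖u‖²_{H¹} = (g‖θ₀‖_{L²}/ν)‖u‖_{L²}. Then u₁ ≡ 0, both u₂ and θ depend only on x₁, gθ = c u₂ for a constant c of the form c = ν n²π²/L² for some n ∈ ℕ, and u₂(x₁) is an eigenfunction of −∂²_{x₁} with periodic mean-free boundary conditions. -/

import Mathlib

noncomputable section
open MeasureTheory Real Filter Topology
open scoped RealInnerProductSpace

/-- The 2D Euclidean plane (the torus is realized by `L`-periodic functions). -/
abbrev E2 := EuclideanSpace ℝ (Fin 2)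

/-- Standard basis vector. -/
def eb (i : Fin 2) : E2 := EuclideanSpace.single i 1

/-- Partial derivative of a scalar field. -/
def pd (f : E2 → ℝ) (i : Fin 2) (x : E2) : ℝ := fderiv ℝ f x (eb i)

/-- Gradient of a scalar field. -/
def grad (f : E2 → ℝ) (x : E2) : E2 := gradient f x

/-- Laplacian of a scalar field. -/
def lap (f : E2 → ℝ) (x : E2) : ℝ := ∑ i, pd (fun y => pd f i y) i x

/-- Divergence of a vector field. -/
def divg (u : E2 → E2) (x : E2) : ℝ := ∑ i, fderiv ℝ u x (eb i) i

/-- Componentwise Laplacian of a vector field. -/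
def vecLap (u : E2 → E2) (x : E2) : E2 :=
  ∑ j, EuclideanSpace.single j (lap (fun y => u y j) x)

/-- Fundamental domain `[0,L)²` of the torus. -/
def Q (L : ℝ) : Set E2 := {x | ∀ i, x i ∈ Set.Ico (0:ℝ) L}

/-- `L`-periodicity in each coordinate direction. -/
def Periodic2 {α : Type*} (L : ℝ) (f : E2 → α) : Prop := ∀ x i, f (x + L • eb i) = f x

/-- The upward gravity vector `(0, g)`. -/
def gvec (g : ℝ) : E2 := EuclideanSpace.single 1 g

/-- Classical form of the semi-dissipative 2D Boussinesq system on the time set `I`: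
momentum, transport and incompressibility equations. -/
def Boussinesq (ν g L : ℝ) (I : Set ℝ) (u : ℝ → E2 → E2) (θ p : ℝ → E2 → ℝ) : Prop :=
  ∀ t ∈ I, ∀ x : E2,
    deriv (fun s => u s x) t + fderiv ℝ (u t) x (u t x) + grad (p t) x
        = ν • vecLap (u t) x + θ t x • gvec g ∧
    deriv (fun s => θ s x) t + ⟪u t x, grad (θ t) x⟫ = 0 ∧
    divg (u t) x = 0 ∧
    Periodic2 L (u t) ∧ Periodic2 L (θ t) ∧ Periodic2 L (p t)

/-- Squared `L²` norm (on the fundamental domain) of a vector field. -/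
def l2V (L : ℝ) (u : E2 → E2) : ℝ := ∫ x in Q L, ‖u x‖^2

/-- Squared `L²` norm of a scalar field. -/
def l2S (L : ℝ) (f : E2 → ℝ) : ℝ := ∫ x in Q L, (f x)^2

/-- Squared (homogeneous) `H¹` norm of a vector field. -/
def h1V (L : ℝ) (u : E2 → E2) : ℝ := ∫ x in Q L, ∑ i, ‖grad (fun y => u y i) x‖^2

/-- Mean-free scalar field. -/
def MeanFreeS (L : ℝ) (f : E2 → ℝ) : Prop := (∫ x in Q L, f x) = 0

/-- Mean-free vector field. -/
def MeanFreeV (L : ℝ) (u : E2 → E2) : Prop := (∫ x in Q L, u x) = 0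

/-- The measurable identification of `ℝ × ℝ` with the Euclidean plane. -/
def prodEquivE2 : ℝ × ℝ ≃ᵐ E2 :=
  MeasurableEquiv.finTwoArrow.symm.trans (MeasurableEquiv.toLp 2 (Fin 2 → ℝ))

lemma prodEquivE2_apply (z : ℝ × ℝ) : prodEquivE2 z = !₂[z.1, z.2] := rfl

lemma measurePreserving_prodEquivE2 : MeasurePreserving prodEquivE2 volume volume :=
  (PiLp.volume_preserving_toLp (Fin 2)).comp
    ((volume_preserving_finTwoArrow ℝ).symm MeasurableEquiv.finTwoArrow)

lemma preimage_Q (L : ℝ) :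
    prodEquivE2 ⁻¹' Q L = Set.Ico (0 : ℝ) L ×ˢ Set.Ico (0 : ℝ) L := by
  ext z
  simp [prodEquivE2_apply, Q, Fin.forall_fin_two]

lemma integrableOn_Ico_prod {f : E2 → ℝ} (hf : Continuous f) (L : ℝ) :
    IntegrableOn (fun z : ℝ × ℝ => f !₂[z.1, z.2])
      (Set.Ico (0 : ℝ) L ×ˢ Set.Ico (0 : ℝ) L) := by
  refine IntegrableOn.mono_set (ContinuousOn.integrableOn_compact
    (isCompact_Icc.prod isCompact_Icc) (Continuous.continuousOn ?_))
    (Set.prod_mono Set.Ico_subset_Icc_self Set.Ico_subset_Icc_self)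
  fun_prop

lemma integrableOn_Q {f : E2 → ℝ} (hf : Continuous f) (L : ℝ) : IntegrableOn f (Q L) := by
  rw [← measurePreserving_prodEquivE2.integrableOn_comp_preimage
    prodEquivE2.measurableEmbedding, preimage_Q]
  exact integrableOn_Ico_prod hf L

lemma setIntegral_Q (f : E2 → ℝ) (L : ℝ) :
    ∫ x in Q L, f x =
      ∫ z in Set.Ico (0 : ℝ) L ×ˢ Set.Ico (0 : ℝ) L, f !₂[z.1, z.2] := by
  rw [← measurePreserving_prodEquivE2.setIntegral_preimage_emb
    prodEquivE2.measurableEmbedding, preimage_Q]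
  rfl

lemma contDiff_pd {f : E2 → ℝ} (hf : ContDiff ℝ (⊤ : ℕ∞) f) (i : Fin 2) :
    ContDiff ℝ (⊤ : ℕ∞) (pd f i) :=
  (hf.fderiv_right (m := (⊤ : ℕ∞)) (by simp)).clm_apply contDiff_const

lemma Periodic2.pd {L : ℝ} {f : E2 → ℝ} (hf : Periodic2 L f) (i : Fin 2) :
    Periodic2 L (pd f i) := by
  intro x j
  have h : (fun y => f (y + L • eb j)) = f := funext fun y => hf y j
  unfold _root_.pd
  rw [← fderiv_comp_add_right, h]

lemma hasDerivAt_line {f : E2 → ℝ} (hf : Differentiable ℝ f) (x : E2) (i : Fin 2) (t : ℝ) :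
    HasDerivAt (fun s : ℝ => f (x + s • eb i)) (pd f i (x + t • eb i)) t := by
  have h : HasDerivAt (fun s : ℝ => x + s • eb i) (eb i) t := by
    simpa using ((hasDerivAt_id t).smul_const (eb i)).const_add x
  exact (hf _).hasFDerivAt.comp_hasDerivAt t h

/-- The integral of a derivative along a full period vanishes. -/
lemma setIntegral_pd_line {L : ℝ} (hL : 0 < L) {f : E2 → ℝ} (hf : ContDiff ℝ (⊤ : ℕ∞) f)
    (hper : Periodic2 L f) (x : E2) (i : Fin 2) :
    ∫ t in Set.Ico (0 : ℝ) L, pd f i (x + t • eb i) = 0 := by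
  rw [integral_Ico_eq_integral_Ioc, ← intervalIntegral.integral_of_le hL.le,
    intervalIntegral.integral_eq_sub_of_hasDerivAt
      (fun t _ => hasDerivAt_line (hf.differentiable (by simp)) x i t)]
  · simp [hper x i]
  · have := (contDiff_pd hf i).continuous
    exact Continuous.intervalIntegrable (by fun_prop) _ _

/-- The integral over the torus of a partial derivative vanishes. -/
lemma setIntegral_pd {L : ℝ} (hL : 0 < L) {f : E2 → ℝ} (hf : ContDiff ℝ (⊤ : ℕ∞) f)
    (hper : Periodic2 L f) (i : Fin 2) : ∫ x in Q L, pd f i x = 0 := by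
  have hint := integrableOn_Ico_prod (contDiff_pd hf i).continuous L
  rw [setIntegral_Q, Measure.volume_eq_prod]
  rw [Measure.volume_eq_prod] at hint
  rw [setIntegral_prod _ hint]
  rw [IntegrableOn, ← Measure.prod_restrict] at hint
  have hsplit₀ (a b : ℝ) : !₂[0, b] + a • eb 0 = (!₂[a, b] : E2) := by
    ext j; fin_cases j <;> simp [eb]
  have hsplit₁ (a b : ℝ) : !₂[a, 0] + b • eb 1 = (!₂[a, b] : E2) := by
    ext j; fin_cases j <;> simp [eb]
  have h₀ (b : ℝ) : ∫ a in Set.Ico (0 : ℝ) L, pd f 0 !₂[a, b] = 0 := by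
    simpa only [hsplit₀] using setIntegral_pd_line hL hf hper !₂[0, b] 0
  have h₁ (a : ℝ) : ∫ b in Set.Ico (0 : ℝ) L, pd f 1 !₂[a, b] = 0 := by
    simpa only [hsplit₁] using setIntegral_pd_line hL hf hper !₂[a, 0] 1
  fin_cases i
  · rw [integral_integral_swap hint]
    simp [h₀]
  · simp [h₁]

/-- Every point of the plane is congruent to a point of the fundamental domain. -/
lemma Periodic2.exists_mem_Q {α : Type*} {L : ℝ} (hL : 0 < L) {f : E2 → α}
    (hf : Periodic2 L f) (x : E2) : ∃ y ∈ Q L, f y = f x := by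
  have key (i : Fin 2) (z : E2) (n : ℤ) : f (z + ((n : ℝ) * L) • eb i) = f z := by
    have hp : Function.Periodic (fun t : ℝ => f (z + t • eb i)) L := fun t => by
      simp only [add_smul, ← add_assoc]
      exact hf _ i
    simpa using hp.int_mul n 0
  refine ⟨x + (((-toIcoDiv hL 0 (x 0) : ℤ) : ℝ) * L) • eb 0
    + (((-toIcoDiv hL 0 (x 1) : ℤ) : ℝ) * L) • eb 1, fun i => ?_, by rw [key, key]⟩
  have h := toIcoMod_mem_Ico hL 0 (x i)
  rw [toIcoMod] at h
  fin_cases i <;> simpa [eb, sub_eq_add_neg] using h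

/-- A nonnegative continuous periodic function with vanishing integral vanishes. -/
lemma eq_zero_of_setIntegral_eq_zero {L : ℝ} (hL : 0 < L) {f : E2 → ℝ} (hf : Continuous f)
    (hper : Periodic2 L f) (hnn : ∀ x, 0 ≤ f x) (hint : ∫ x in Q L, f x = 0) (x : E2) :
    f x = 0 := by
  have hae := (setIntegral_eq_zero_iff_of_nonneg_ae (Eventually.of_forall hnn)
    (integrableOn_Q hf L)).1 hint
  have hUo : IsOpen {y : E2 | ∀ i, y i ∈ Set.Ioo (0 : ℝ) L} := by
    simp only [Set.ofPred_forall]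
    exact isOpen_iInter_of_finite fun i => isOpen_Ioo.preimage (by fun_prop)
  have hU : Set.EqOn f 0 {y : E2 | ∀ i, y i ∈ Set.Ioo (0 : ℝ) L} :=
    Measure.eqOn_open_of_ae_eq (ae_restrict_of_ae_restrict_of_subset
      (fun y hy i => Set.Ioo_subset_Ico_self (hy i)) hae) hUo hf.continuousOn
      continuousOn_const
  obtain ⟨y, hy, hyx⟩ := hper.exists_mem_Q hL x
  rw [← hyx]
  have hlim : Tendsto (fun t : ℝ => f (y + t • (eb 0 + eb 1))) (𝓝[>] 0) (𝓝 (f y)) := by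
    have hc : Continuous fun t : ℝ => f (y + t • (eb 0 + eb 1)) := by fun_prop
    simpa using (hc.tendsto 0).mono_left nhdsWithin_le_nhds
  have hev (i : Fin 2) : ∀ᶠ t : ℝ in 𝓝[>] 0, t < L - y i :=
    nhdsWithin_le_nhds (Iio_mem_nhds (sub_pos.2 (hy i).2))
  refine tendsto_nhds_unique (hlim.congr' ?_) tendsto_const_nhds
  filter_upwards [hev 0, hev 1, self_mem_nhdsWithin] with t h0 h1 ht
  refine hU fun i => ?_
  have hi := hy i
  simp only [Set.mem_Ioi] at ht
  fin_cases i <;> simp [eb] at hi ⊢ <;> constructor <;> linarith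

/-- A nonzero periodic solution of `w'' = -k² w` has a wave number compatible with the period. -/
lemma exists_wave_number {k L : ℝ} (hk : 0 < k) (hL : 0 < L) {w w' : ℝ → ℝ}
    (hw : ∀ t, HasDerivAt w (w' t) t) (hw' : ∀ t, HasDerivAt w' (-(k ^ 2 * w t)) t)
    (hper : w L = w 0) (hper' : w' L = w' 0) {s : ℝ} (hs : w s ≠ 0) :
    ∃ n : ℕ, k * L = n * (2 * π) := by
  have hcos (t : ℝ) : HasDerivAt (fun t => cos (k * t)) (-sin (k * t) * k) t := by
    simpa using ((hasDerivAt_id t).const_mul k).cos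
  have hsin (t : ℝ) : HasDerivAt (fun t => sin (k * t)) (cos (k * t) * k) t := by
    simpa using ((hasDerivAt_id t).const_mul k).sin
  have hP (t : ℝ) : HasDerivAt (fun t => k * w t * cos (k * t) - w' t * sin (k * t)) 0 t := by
    refine ((((hw t).const_mul k).mul (hcos t)).sub ((hw' t).mul (hsin t))).congr_deriv ?_
    ring
  have hR (t : ℝ) : HasDerivAt (fun t => k * w t * sin (k * t) + w' t * cos (k * t)) 0 t := by
    refine ((((hw t).const_mul k).mul (hsin t)).add ((hw' t).mul (hcos t))).congr_deriv ?_
    ring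
  have hP0 (t : ℝ) : k * w t * cos (k * t) - w' t * sin (k * t) = k * w 0 := by
    simpa using is_const_of_deriv_eq_zero (fun t => (hP t).differentiableAt)
      (fun t => (hP t).deriv) t 0
  have hR0 (t : ℝ) : k * w t * sin (k * t) + w' t * cos (k * t) = w' 0 := by
    simpa using is_const_of_deriv_eq_zero (fun t => (hR t).differentiableAt)
      (fun t => (hR t).deriv) t 0
  have hpos : 0 < (k * w 0) ^ 2 + w' 0 ^ 2 := by
    have : 0 < (k * w s) ^ 2 := by positivity
    rw [← hP0 s, ← hR0 s]
    nlinarith [sin_sq_add_cos_sq (k * s), sq_nonneg (w' s)]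
  have hPL := hP0 L
  have hRL := hR0 L
  rw [hper, hper'] at hPL hRL
  have hone : cos (k * L) = 1 := by
    refine mul_left_cancel₀ hpos.ne' ?_
    linear_combination (k * w 0) * hPL + w' 0 * hRL
  obtain ⟨n, hn⟩ := (cos_eq_one_iff _).1 hone
  have hn0 : 0 ≤ n := by
    by_contra! h
    have : (n : ℝ) < 0 := by exact_mod_cast h
    nlinarith [pi_pos, mul_pos hk hL]
  lift n to ℕ using hn0
  exact ⟨n, by simpa using hn.symm⟩

lemma eq_coord_smul_eb (x : E2) : x = x 0 • eb 0 + x 1 • eb 1 := by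
  ext j; fin_cases j <;> simp [eb]

lemma fderiv_apply_eq_pd (f : E2 → ℝ) (x v : E2) :
    fderiv ℝ f x v = v 0 * pd f 0 x + v 1 * pd f 1 x := by
  conv_lhs => rw [eq_coord_smul_eb v]
  simp [pd]

lemma grad_apply (f : E2 → ℝ) (x : E2) (i : Fin 2) : grad f x i = pd f i x := by
  have h : ⟪gradient f x, eb i⟫ = fderiv ℝ f x (eb i) := inner_gradient_left
  rw [pd, ← h, eb, EuclideanSpace.inner_single_right]
  simp [grad]

lemma norm_sq_grad (f : E2 → ℝ) (x : E2) : ‖grad f x‖ ^ 2 = pd f 0 x ^ 2 + pd f 1 x ^ 2 := by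
  simp [EuclideanSpace.norm_sq_eq, grad_apply]

lemma fderiv_apply_coord {u : E2 → E2} (hu : Differentiable ℝ u) (x v : E2) (i : Fin 2) :
    fderiv ℝ u x v i = fderiv ℝ (fun y => u y i) x v := by
  have h : HasFDerivAt (fun y => u y i) ((EuclideanSpace.proj i).comp (fderiv ℝ u x)) x :=
    (EuclideanSpace.proj (𝕜 := ℝ) i).hasFDerivAt.comp x (hu x).hasFDerivAt
  rw [h.fderiv]
  rfl

lemma pd_add {f h : E2 → ℝ} (hf : Differentiable ℝ f) (hh : Differentiable ℝ h) (i : Fin 2)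
    (x : E2) : pd (fun y => f y + h y) i x = pd f i x + pd h i x := by
  simp [pd, fderiv_fun_add (hf x) (hh x)]

lemma pd_mul {f h : E2 → ℝ} (hf : Differentiable ℝ f) (hh : Differentiable ℝ h) (i : Fin 2)
    (x : E2) : pd (fun y => f y * h y) i x = f x * pd h i x + h x * pd f i x := by
  simp [pd, fderiv_fun_mul (hf x) (hh x)]

/-- A differentiable function with vanishing partial derivatives is constant. -/
lemma const_of_pd_eq_zero {f : E2 → ℝ} (hf : Differentiable ℝ f) (h : ∀ i x, pd f i x = 0)
    (x y : E2) : f x = f y :=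
  is_const_of_fderiv_eq_zero hf (fun z => by ext v; simp [fderiv_apply_eq_pd, h]) x y

/-- A function with vanishing `i`-th partial derivative is invariant in direction `i`. -/
lemma line_const_of_pd_eq_zero {f : E2 → ℝ} (hf : Differentiable ℝ f) {i : Fin 2}
    (h : ∀ x, pd f i x = 0) (x : E2) (t : ℝ) : f (x + t • eb i) = f x := by
  have hd := hasDerivAt_line hf x i
  simpa using is_const_of_deriv_eq_zero (fun t => (hd t).differentiableAt)
    (fun t => (hd t).deriv.trans (h _)) t 0

lemma eq_add_smul_eb_one {x y : E2} (h : x 0 = y 0) : x = y + (x 1 - y 1) • eb 1 := by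
  ext j; fin_cases j <;> simp [eb, h]

/-- The steady Boussinesq system written in terms of the components of the velocity. -/
structure SteadyComponents (ν g L : ℝ) (v w θ p : E2 → ℝ) : Prop where
  contDiff_v : ContDiff ℝ (⊤ : ℕ∞) v
  contDiff_w : ContDiff ℝ (⊤ : ℕ∞) w
  contDiff_θ : ContDiff ℝ (⊤ : ℕ∞) θ
  contDiff_p : ContDiff ℝ (⊤ : ℕ∞) p
  periodic_v : Periodic2 L v
  periodic_w : Periodic2 L w
  periodic_θ : Periodic2 L θ
  periodic_p : Periodic2 L p
  momentum_v : ∀ x, v x * pd v 0 x + w x * pd v 1 x + pd p 0 x =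
    ν * (pd (pd v 0) 0 x + pd (pd v 1) 1 x)
  momentum_w : ∀ x, v x * pd w 0 x + w x * pd w 1 x + pd p 1 x =
    ν * (pd (pd w 0) 0 x + pd (pd w 1) 1 x) + g * θ x
  div_free : ∀ x, pd v 0 x + pd w 1 x = 0

lemma Boussinesq.steadyComponents {ν g L : ℝ} {u : E2 → E2} {θ p : E2 → ℝ}
    (hsol : Boussinesq ν g L Set.univ (fun _ => u) (fun _ => θ) (fun _ => p))
    (hu : ContDiff ℝ (⊤ : ℕ∞) u) (hθ : ContDiff ℝ (⊤ : ℕ∞) θ) (hp : ContDiff ℝ (⊤ : ℕ∞) p) :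
    SteadyComponents ν g L (fun x => u x 0) (fun x => u x 1) θ p := by
  have hs (x : E2) := hsol 0 (Set.mem_univ _) x
  have hud : Differentiable ℝ u := hu.differentiable (by simp)
  have hmom (x : E2) (i : Fin 2) := congrArg (fun z : E2 => z i) (hs x).1
  refine ⟨?_, ?_, hθ, hp, fun x i => ?_, fun x i => ?_, (hs 0).2.2.2.2.1, (hs 0).2.2.2.2.2,
    fun x => ?_, fun x => ?_, fun x => ?_⟩
  · exact contDiff_piLp_apply (p := 2) |>.comp hu
  · exact contDiff_piLp_apply (p := 2) |>.comp hu
  · exact congrArg (fun z : E2 => z 0) ((hs 0).2.2.2.1 x i)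
  · exact congrArg (fun z : E2 => z 1) ((hs 0).2.2.2.1 x i)
  · simpa [fderiv_apply_coord hud, fderiv_apply_eq_pd, grad_apply, vecLap, lap, gvec]
      using hmom x 0
  · simpa [fderiv_apply_coord hud, fderiv_apply_eq_pd, grad_apply, vecLap, lap, gvec, mul_comm g]
      using hmom x 1
  · simpa [divg, fderiv_apply_coord hud, pd] using (hs x).2.2.1

namespace SteadyComponents

variable {ν g L : ℝ} {v w θ p : E2 → ℝ}

/-- The energy balance: viscous dissipation equals the work of buoyancy. -/
lemma energy_balance (h : SteadyComponents ν g L v w θ p) (hL : 0 < L) :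
    ν * ∫ x in Q L, (pd v 0 x ^ 2 + pd v 1 x ^ 2 + (pd w 0 x ^ 2 + pd w 1 x ^ 2)) =
      g * ∫ x in Q L, θ x * w x := by
  -- the energy flux
  let F (c : E2 → ℝ) (i : Fin 2) (y : E2) : ℝ :=
    c y * (1 / 2 * (v y * v y + w y * w y) + p y) + -ν * (v y * pd v i y + w y * pd w i y)
  have hv := h.contDiff_v
  have hw := h.contDiff_w
  have hθ := h.contDiff_θ
  have hp := h.contDiff_p
  have hdv (i : Fin 2) := contDiff_pd hv i
  have hdw (i : Fin 2) := contDiff_pd hw i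
  have hF {c : E2 → ℝ} (hc : ContDiff ℝ (⊤ : ℕ∞) c) (i : Fin 2) :
      ContDiff ℝ (⊤ : ℕ∞) (F c i) :=
    (hc.mul ((contDiff_const.mul ((hv.mul hv).add (hw.mul hw))).add hp)).add
      (contDiff_const.mul ((hv.mul (hdv i)).add (hw.mul (hdw i))))
  have hFper {c : E2 → ℝ} (hc : Periodic2 L c) (i : Fin 2) : Periodic2 L (F c i) :=
    fun x j => by
      simp only [F, hc x j, h.periodic_v x j, h.periodic_w x j, h.periodic_p x j,
        h.periodic_v.pd i x j, h.periodic_w.pd i x j]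
  have dv : Differentiable ℝ v := hv.differentiable (by simp)
  have dw : Differentiable ℝ w := hw.differentiable (by simp)
  have dp : Differentiable ℝ p := hp.differentiable (by simp)
  have ddv (i : Fin 2) : Differentiable ℝ (pd v i) := (hdv i).differentiable (by simp)
  have ddw (i : Fin 2) : Differentiable ℝ (pd w i) := (hdw i).differentiable (by simp)
  have hpdF {c : E2 → ℝ} (dc : Differentiable ℝ c) (i : Fin 2) (x : E2) : pd (F c i) i x =
      c x * (v x * pd v i x + w x * pd w i x + pd p i x) +
      (1 / 2 * (v x * v x + w x * w x) + p x) * pd c i x +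
      -ν * (v x * pd (pd v i) i x + pd v i x * pd v i x +
        (w x * pd (pd w i) i x + pd w i x * pd w i x)) := by
    have hconst (a : ℝ) : pd (fun _ : E2 => a) i x = 0 := by simp [pd]
    simp only [F]
    rw [pd_add (by fun_prop) (by fun_prop), pd_mul (by fun_prop) (by fun_prop),
      pd_add (by fun_prop) (by fun_prop), pd_mul (by fun_prop) (by fun_prop),
      pd_add (by fun_prop) (by fun_prop), pd_mul (by fun_prop) (by fun_prop),
      pd_mul (by fun_prop) (by fun_prop), pd_mul (by fun_prop) (by fun_prop),
      pd_add (by fun_prop) (by fun_prop), pd_mul (by fun_prop) (by fun_prop),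
      pd_mul (by fun_prop) (by fun_prop), hconst, hconst]
    ring
  have hpt (x : E2) : pd (F v 0) 0 x + pd (F w 1) 1 x = g * (θ x * w x) -
      ν * (pd v 0 x ^ 2 + pd v 1 x ^ 2 + (pd w 0 x ^ 2 + pd w 1 x ^ 2)) := by
    rw [hpdF dv, hpdF dw]
    linear_combination v x * h.momentum_v x + w x * h.momentum_w x +
      (1 / 2 * (v x * v x + w x * w x) + p x) * h.div_free x
  have hzero : ∫ x in Q L, (pd (F v 0) 0 x + pd (F w 1) 1 x) = 0 := by
    rw [integral_add (integrableOn_Q (contDiff_pd (hF hv 0) 0).continuous L)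
      (integrableOn_Q (contDiff_pd (hF hw 1) 1).continuous L),
      setIntegral_pd hL (hF hv 0) (hFper h.periodic_v 0),
      setIntegral_pd hL (hF hw 1) (hFper h.periodic_w 1), add_zero]
  have cv := fun i => (hdv i).continuous
  have cw := fun i => (hdw i).continuous
  have cθ := hθ.continuous
  have cw' := hw.continuous
  simp only [hpt] at hzero
  rw [integral_sub (integrableOn_Q (by fun_prop) L) (integrableOn_Q (by fun_prop) L),
    integral_const_mul, integral_const_mul] at hzero
  linarith

/-- Vertical shear flows whose buoyancy is proportional to the velocity satisfy a linear
oscillator equation: the pressure gradient vanishes. -/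
lemma shear_oscillator (h : SteadyComponents ν g L v w θ p) (hL : 0 < L) {c : ℝ}
    (hv : ∀ x, v x = 0) (hθ : ∀ x, g * θ x = c * w x) :
    (∀ x, pd w 1 x = 0) ∧ ∀ x, ν * pd (pd w 0) 0 x = -(c * w x) := by
  have hv0 : v = fun _ => 0 := funext hv
  have hpdv (i : Fin 2) (x : E2) : pd v i x = 0 := by simp [hv0, pd]
  have hpdv' (i : Fin 2) : pd v i = fun _ => 0 := funext (hpdv i)
  have hw1 (x : E2) : pd w 1 x = 0 := by simpa [hpdv] using h.div_free x
  have hw1' : pd w 1 = fun _ => 0 := funext hw1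
  have hconst (i : Fin 2) (x : E2) : pd (fun _ : E2 => (0 : ℝ)) i x = 0 := by simp [pd]
  have hp0 (x : E2) : pd p 0 x = 0 := by
    simpa [hpdv, hpdv', hconst] using h.momentum_v x
  have hp1 (x : E2) : pd p 1 x = ν * pd (pd w 0) 0 x + c * w x := by
    simpa [hv, hw1, hw1', hconst, hθ] using h.momentum_w x
  have dp : Differentiable ℝ p := h.contDiff_p.differentiable (by simp)
  have dw : Differentiable ℝ w := h.contDiff_w.differentiable (by simp)
  refine ⟨hw1, fun x => ?_⟩
  have hwshift (t : ℝ) : (fun y => w (y + t • eb 1)) = w :=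
    funext fun y => line_const_of_pd_eq_zero dw hw1 y t
  have hpdshift (f : E2 → ℝ) (t : ℝ) (hf : (fun y => f (y + t • eb 1)) = f) :
      (fun y => pd f 0 (y + t • eb 1)) = pd f 0 := by
    funext y
    unfold pd
    rw [← fderiv_comp_add_right, hf]
  have hp1shift (t : ℝ) : pd p 1 (x + t • eb 1) = pd p 1 x := by
    rw [hp1, hp1, congrFun (hwshift t) x,
      congrFun (hpdshift _ t (hpdshift _ t (hwshift t))) x]
  have hint := setIntegral_pd_line hL h.contDiff_p h.periodic_p x 1
  simp only [hp1shift] at hint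
  have hzero : pd p 1 x = 0 := by simpa [hL.le, hL.ne'] using hint
  linarith [hp1 x]

/-- On the boundary parabola the velocity is vertical and proportional to the buoyancy. -/
lemma proportional_of_parabola (h : SteadyComponents ν g L v w θ p) (hL : 0 < L) {A V : ℝ}
    (hA : 0 < A) (hV : 0 < V) (hA2 : ∫ x in Q L, θ x ^ 2 = A ^ 2)
    (hV2 : ∫ x in Q L, (v x ^ 2 + w x ^ 2) = V ^ 2) (hAV : ∫ x in Q L, θ x * w x = A * V) :
    (∀ x, v x = 0) ∧ ∀ x, θ x = A / V * w x := by
  have cv := h.contDiff_v.continuous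
  have cw := h.contDiff_w.continuous
  have cθ := h.contDiff_θ.continuous
  have hint : ∫ x in Q L, ((θ x - A / V * w x) ^ 2 + (A / V * v x) ^ 2) = 0 := by
    have hexp (x : E2) : (θ x - A / V * w x) ^ 2 + (A / V * v x) ^ 2 =
        θ x ^ 2 + (A / V) ^ 2 * (v x ^ 2 + w x ^ 2) - 2 * (A / V) * (θ x * w x) := by ring
    simp only [hexp]
    rw [integral_sub (integrableOn_Q (by fun_prop) L) (integrableOn_Q (by fun_prop) L),
      integral_add (integrableOn_Q (by fun_prop) L) (integrableOn_Q (by fun_prop) L),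
      integral_const_mul, integral_const_mul, hA2, hV2, hAV]
    field_simp
    ring
  have hzero (x : E2) := eq_zero_of_setIntegral_eq_zero
    (f := fun x => (θ x - A / V * w x) ^ 2 + (A / V * v x) ^ 2) hL (by fun_prop)
    (fun x i => by simp only [h.periodic_θ x i, h.periodic_v x i, h.periodic_w x i])
    (fun x => by positivity) hint x
  refine ⟨fun x => ?_, fun x => ?_⟩
  · have : (A / V * v x) ^ 2 = 0 := by
      linarith [hzero x, sq_nonneg (θ x - A / V * w x), sq_nonneg (A / V * v x)]
    simpa [hA.ne', hV.ne'] using this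
  · have : (θ x - A / V * w x) ^ 2 = 0 := by
      linarith [hzero x, sq_nonneg (θ x - A / V * w x), sq_nonneg (A / V * v x)]
    exact sub_eq_zero.1 (pow_eq_zero_iff two_ne_zero |>.1 this)

end SteadyComponents

/-- A smooth periodic function with vanishing Dirichlet energy is constant. -/
lemma const_of_dirichlet_eq_zero {L : ℝ} (hL : 0 < L) {v w : E2 → ℝ}
    (hv : ContDiff ℝ (⊤ : ℕ∞) v) (hw : ContDiff ℝ (⊤ : ℕ∞) w) (hvp : Periodic2 L v)
    (hwp : Periodic2 L w)
    (hint : ∫ x in Q L, (pd v 0 x ^ 2 + pd v 1 x ^ 2 + (pd w 0 x ^ 2 + pd w 1 x ^ 2)) = 0)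
    (x y : E2) : v x = v y ∧ w x = w y := by
  have cv := fun i => (contDiff_pd hv i).continuous
  have cw := fun i => (contDiff_pd hw i).continuous
  have hzero (x : E2) := eq_zero_of_setIntegral_eq_zero
    (f := fun x => pd v 0 x ^ 2 + pd v 1 x ^ 2 + (pd w 0 x ^ 2 + pd w 1 x ^ 2)) hL (by fun_prop)
    (fun x i => by simp only [hvp.pd _ x i, hwp.pd _ x i]) (fun x => by positivity) hint x
  refine ⟨const_of_pd_eq_zero (hv.differentiable (by simp)) (fun i z => ?_) x y,
    const_of_pd_eq_zero (hw.differentiable (by simp)) (fun i z => ?_) x y⟩ <;>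
  · have hz := hzero z
    rw [← sq_eq_zero_iff]
    fin_cases i <;> dsimp at hz ⊢ <;>
      linarith [sq_nonneg (pd v 0 z), sq_nonneg (pd v 1 z), sq_nonneg (pd w 0 z),
        sq_nonneg (pd w 1 z)]

lemma volume_real_Q {L : ℝ} (hL : 0 < L) : volume.real (Q L) = L ^ 2 := by
  have h := setIntegral_Q (fun _ => 1) L
  simp only [setIntegral_const, smul_eq_mul, mul_one] at h
  rw [h, Measure.volume_eq_prod, measureReal_prod_prod]
  simp [hL.le, sq]

/-- A constant mean-free vector field vanishes. -/
lemma MeanFreeV.eq_zero_of_const {L : ℝ} (hL : 0 < L) {u : E2 → E2} (hu : MeanFreeV L u)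
    (hconst : ∀ x y, u x = u y) (x : E2) : u x = 0 := by
  have h : ∫ _ in Q L, u x = 0 := by
    rw [← hu]
    exact integral_congr_ae (Eventually.of_forall fun y => hconst x y)
  simpa [volume_real_Q hL, hL.ne'] using h

/-- **Steady states on the boundary parabola of the energy–enstrophy region.**
Suppose `(u, θ)` is a smooth (nontrivial) steady state of the 2D semi-dissipative
Boussinesq system lying on the parabola `‖u‖²_{H¹} = (g‖θ₀‖_{L²}/ν) ‖u‖_{L²}`.
Then `u₁ ≡ 0`, both `u₂` and `θ` depend only on `x₁`, `gθ = c u₂` for a constant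
`c = ν n²π²/L²` for some `n ∈ ℕ`, and `u₂(x₁)` is an eigenfunction of `−∂²_{x₁}`
(periodic, mean-free). -/
theorem steady_states_on_parabola (ν g L : ℝ) (hν : 0 < ν) (hL : 0 < L) (hg : 0 < g)
    (u : E2 → E2) (θ p : E2 → ℝ)
    (hsol : Boussinesq ν g L Set.univ (fun _ => u) (fun _ => θ) (fun _ => p))
    (hu_sm : ContDiff ℝ (⊤ : ℕ∞) u) (hθ_sm : ContDiff ℝ (⊤ : ℕ∞) θ) (hp_sm : ContDiff ℝ (⊤ : ℕ∞) p)
    (hu_mf : MeanFreeV L u) (hθ_mf : MeanFreeS L θ)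
    (hu_ne : ∃ x, u x ≠ 0)
    -- the parabola `‖u‖²_{H¹} = (g ‖θ₀‖_{L²} / ν) ‖u‖_{L²}` :
    (hparab : h1V L u = (g * Real.sqrt (l2S L θ) / ν) * Real.sqrt (l2V L u)) :
    (∀ x : E2, u x 0 = 0) ∧
    (∀ x y : E2, x 0 = y 0 → u x 1 = u y 1 ∧ θ x = θ y) ∧
    (∃ (c : ℝ) (n : ℕ), c = ν * (n : ℝ) ^ 2 * Real.pi ^ 2 / L ^ 2 ∧
      (∀ x : E2, g * θ x = c * u x 1) ∧
      -- `u₂` is an eigenfunction of `−∂²_{x₁}` with eigenvalue `c/ν` :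
      (∀ x : E2, -(pd (fun y => pd (fun w => u w 1) 0 y) 0 x) = (c / ν) * u x 1)) := by
  have h := hsol.steadyComponents hu_sm hθ_sm hp_sm
  have hh1 : h1V L u = ∫ x in Q L, (pd (fun y => u y 0) 0 x ^ 2 + pd (fun y => u y 0) 1 x ^ 2 +
      (pd (fun y => u y 1) 0 x ^ 2 + pd (fun y => u y 1) 1 x ^ 2)) := by
    simp [h1V, norm_sq_grad]
  have hl2 : l2V L u = ∫ x in Q L, (u x 0 ^ 2 + u x 1 ^ 2) := by
    simp [l2V, EuclideanSpace.norm_sq_eq]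
  have hl2_pos : 0 < l2V L u := by
    have hnn : 0 ≤ l2V L u := integral_nonneg fun x => by positivity
    refine hnn.lt_of_ne' fun h0 => ?_
    obtain ⟨x, hx⟩ := hu_ne
    have hcont := hu_sm.continuous
    have := eq_zero_of_setIntegral_eq_zero (f := fun x => ‖u x‖ ^ 2) hL (by fun_prop)
      (fun y i => by simp only [(hsol 0 (Set.mem_univ _) 0).2.2.2.1 y i])
      (fun y => by positivity) h0 x
    exact hx (by simpa using this)
  have hθ_nn : 0 ≤ l2S L θ := integral_nonneg fun x => by positivity
  have hV : 0 < √(l2V L u) := sqrt_pos.2 hl2_pos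
  have hA : 0 < √(l2S L θ) := by
    refine (sqrt_nonneg _).lt_of_ne' fun h0 => ?_
    rw [h0, hh1] at hparab
    have hc := const_of_dirichlet_eq_zero hL h.contDiff_v h.contDiff_w h.periodic_v h.periodic_w
      (by simpa using hparab)
    obtain ⟨x, hx⟩ := hu_ne
    refine hx (hu_mf.eq_zero_of_const hL (fun y z => ?_) x)
    ext j
    fin_cases j
    exacts [(hc y z).1, (hc y z).2]
  have henergy := h.energy_balance hL
  rw [← hh1, hparab] at henergy
  have hAV : ∫ x in Q L, θ x * u x 1 = √(l2S L θ) * √(l2V L u) := by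
    field_simp at henergy
    exact henergy.symm
  obtain ⟨hu0, hθu⟩ := h.proportional_of_parabola hL hA hV (sq_sqrt hθ_nn).symm
    (by rw [sq_sqrt hl2_pos.le, hl2]) hAV
  obtain ⟨c, hc, hgθ⟩ : ∃ c : ℝ, 0 < c ∧ ∀ x, g * θ x = c * u x 1 :=
    ⟨g * (√(l2S L θ) / √(l2V L u)), by positivity, fun x => by rw [hθu x, mul_assoc]⟩
  obtain ⟨hw1, hosc⟩ := h.shear_oscillator hL hu0 hgθ
  have dw : Differentiable ℝ fun x => u x 1 := h.contDiff_w.differentiable (by simp)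
  have hu1 (x y : E2) (hxy : x 0 = y 0) : u x 1 = u y 1 := by
    rw [eq_add_smul_eb_one hxy]
    exact line_const_of_pd_eq_zero dw hw1 y _
  have heig (x : E2) : pd (pd (fun w => u w 1) 0) 0 x = -(c / ν * u x 1) := by
    field_simp
    linarith [hosc x]
  have hk : 0 < √(c / ν) := sqrt_pos.2 (by positivity)
  obtain ⟨n, hn⟩ : ∃ n : ℕ, √(c / ν) * L = n * (2 * π) := by
    obtain ⟨x, hx⟩ := hu_ne
    have hx1 : u (0 + x 0 • eb 0) 1 ≠ 0 := by
      rw [hu1 _ x (by simp [eb])]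
      refine fun h1 => hx ?_
      ext j
      fin_cases j
      exacts [hu0 x, h1]
    refine exists_wave_number (w := fun t => u (0 + t • eb 0) 1)
      (w' := fun t => pd (fun w => u w 1) 0 (0 + t • eb 0)) hk hL
      (hasDerivAt_line dw 0 0) (fun t => ?_) ?_ ?_ hx1
    · refine (hasDerivAt_line ((contDiff_pd h.contDiff_w 0).differentiable (by simp))
        0 0 t).congr_deriv ?_
      rw [heig, sq_sqrt (by positivity)]
    · simpa using h.periodic_w 0 0
    · simpa using h.periodic_w.pd 0 0 0
  refine ⟨hu0, fun x y hxy => ⟨hu1 x y hxy, by rw [hθu, hθu, hu1 x y hxy]⟩,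
    c, 2 * n, ?_, hgθ, fun x => neg_eq_iff_eq_neg.2 (heig x)⟩
  have hsq : c / ν * L ^ 2 = (n * (2 * π)) ^ 2 := by
    rw [← hn, mul_pow, sq_sqrt (by positivity)]
  field_simp at hsq
  field_simp
  push_cast
  linarith
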